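/- arXiv:2605.11607 — 3 statements merged into one kernel-verified Lean document; each statement's English description precedes it below -/
import Mathlib

section
/- Let Σ be the PPLS joint covariance matrix. Then det Σ = (σ_e²)^{p−r} · (σ_f²)^{q−r} · ∏_{i=1}^r D_i, where D_i = (σ_f² + σ_h²)(θ_i² + σ_e²) + b_i² θ_i² σ_e². -/
open Matrix

/-!
With `U = W ⊕ C` and `V = Uᵀ`, so that `V * U = 1`, the covariance is `S + U * M * V`, where
`S = σ_e² ⊕ σ_f²` and `M` consists of four diagonal `r × r` blocks. As `S` is scalar on each
summand, it preserves both the range of the projection `U * V` and that of `1 - U * V`. On the first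
the covariance acts as `S + M`, a direct sum of `r` matrices of size `2 × 2`; on the second it acts
as `S`, with multiplicities `p - r` and `q - r`. The factorization
`S + U * M * V = (1 + U * (S + M - 1) * V) * (U * V + S * (1 - U * V))` separates the two parts
without inverting any block, in contrast to a Schur complement.
-/

section LeftInverse

variable {R m n : Type*} [CommRing R] [Fintype m] [Fintype n] [DecidableEq n]

lemma card_le_card_of_matrix_mul_eq_one [Nontrivial R] {U : Matrix m n R} {V : Matrix n m R}
    (hVU : V * U = 1) : Fintype.card n ≤ Fintype.card m :=
  card_le_of_injective R U.mulVecLin <| Function.LeftInverse.injective (g := V.mulVec) fun x => by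
    rw [mulVecLin_apply, mulVec_mulVec, hVU, one_mulVec]

variable [DecidableEq m]

lemma det_smul_one_add_mul_comm_of_card_le (s : R) (A : Matrix m n R) (B : Matrix n m R)
    (hnm : Fintype.card n ≤ Fintype.card m) :
    (s • 1 + A * B).det = s ^ (Fintype.card m - Fintype.card n) * (s • 1 + B * A).det := by
  simpa [eval_charpoly, smul_one_eq_diagonal] using
    congrArg (Polynomial.eval s) (charpoly_mul_comm_of_le (-A) B hnm)

lemma det_mul_add_smul_one_sub_mul {U : Matrix m n R} {V : Matrix n m R} (hVU : V * U = 1)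
    (s : R) : (U * V + s • (1 - U * V)).det = s ^ (Fintype.card m - Fintype.card n) := by
  nontriviality R
  have hsplit : U * V + s • (1 - U * V) = s • 1 + ((1 - s) • U) * V := by
    rw [Matrix.smul_mul]
    module
  have hinner : s • 1 + V * ((1 - s) • U) = 1 := by
    rw [Matrix.mul_smul, hVU]
    module
  rw [hsplit, det_smul_one_add_mul_comm_of_card_le s _ _ (card_le_card_of_matrix_mul_eq_one hVU),
    hinner, det_one, mul_one]

lemma det_add_mul_mul_of_intertwining {U : Matrix m n R} {V : Matrix n m R} (hVU : V * U = 1)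
    {D : Matrix m m R} {D' : Matrix n n R} (hU : D * U = U * D') (hV : V * D = D' * V)
    (M : Matrix n n R) :
    (D + U * M * V).det = (U * V + D * (1 - U * V)).det * (D' + M).det := by
  have hVfix : V * (U * V + D * (1 - U * V)) = V := by
    have hproj : V * (1 - U * V) = 0 := by
      rw [Matrix.mul_sub, Matrix.mul_one, ← Matrix.mul_assoc, hVU, Matrix.one_mul, sub_self]
    rw [Matrix.mul_add, ← Matrix.mul_assoc, ← Matrix.mul_assoc, hVU, Matrix.one_mul, hV,
      Matrix.mul_assoc, hproj, Matrix.mul_zero, add_zero]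
  have hfactor : D + U * M * V
      = (1 + U * ((D' + M - 1) * V)) * (U * V + D * (1 - U * V)) := by
    rw [Matrix.add_mul, Matrix.mul_assoc, Matrix.mul_assoc, Matrix.mul_assoc, hVfix]
    simp only [Matrix.add_mul, Matrix.sub_mul, Matrix.mul_add, Matrix.mul_sub, Matrix.one_mul,
      Matrix.mul_one, ← Matrix.mul_assoc, hU]
    abel
  rw [hfactor, det_mul, det_one_add_mul_comm, Matrix.mul_assoc, hVU, Matrix.mul_one,
    add_sub_cancel, mul_comm]

end LeftInverse

section FromBlocks

variable {R m₁ m₂ n n₁ n₂ : Type*} [CommRing R] [Fintype m₁] [DecidableEq m₁] [Fintype m₂]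
  [DecidableEq m₂] [Fintype n] [DecidableEq n] [Fintype n₁] [DecidableEq n₁] [Fintype n₂]
  [DecidableEq n₂]

lemma det_fromBlocks_mul_mul_add_smul_one {U₁ : Matrix m₁ n₁ R} {V₁ : Matrix n₁ m₁ R}
    {U₂ : Matrix m₂ n₂ R} {V₂ : Matrix n₂ m₂ R} (h₁ : V₁ * U₁ = 1) (h₂ : V₂ * U₂ = 1)
    (A : Matrix n₁ n₁ R) (B : Matrix n₁ n₂ R) (C : Matrix n₂ n₁ R) (D : Matrix n₂ n₂ R)
    (s t : R) :
    (fromBlocks (U₁ * A * V₁ + s • 1) (U₁ * B * V₂) (U₂ * C * V₁) (U₂ * D * V₂ + t • 1)).det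
      = s ^ (Fintype.card m₁ - Fintype.card n₁) * t ^ (Fintype.card m₂ - Fintype.card n₂)
        * (fromBlocks (A + s • 1) B C (D + t • 1)).det := by
  let U := fromBlocks U₁ 0 0 U₂
  let V := fromBlocks V₁ 0 0 V₂
  let S : Matrix (m₁ ⊕ m₂) (m₁ ⊕ m₂) R := fromBlocks (s • 1) 0 0 (t • 1)
  let S' : Matrix (n₁ ⊕ n₂) (n₁ ⊕ n₂) R := fromBlocks (s • 1) 0 0 (t • 1)
  let M := fromBlocks A B C D
  have hVU : V * U = 1 := by simp [U, V, fromBlocks_multiply, h₁, h₂]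
  have hU : S * U = U * S' := by simp [U, S, S', fromBlocks_multiply]
  have hV : V * S = S' * V := by simp [V, S, S', fromBlocks_multiply]
  have hcompl : (U * V + S * (1 - U * V)).det
      = s ^ (Fintype.card m₁ - Fintype.card n₁) * t ^ (Fintype.card m₂ - Fintype.card n₂) := by
    rw [← det_mul_add_smul_one_sub_mul h₁, ← det_mul_add_smul_one_sub_mul h₂,
      ← det_fromBlocks_zero₂₁ _ 0]
    simp [U, V, S, ← fromBlocks_one, fromBlocks_multiply, fromBlocks_neg, fromBlocks_add,
      sub_eq_add_neg]
  calc _ = (S + U * M * V).det := by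
        simp [U, V, S, M, fromBlocks_multiply, fromBlocks_add, add_comm]
    _ = (U * V + S * (1 - U * V)).det * (S' + M).det :=
        det_add_mul_mul_of_intertwining hVU hU hV M
    _ = _ := by
        rw [hcompl]
        simp [S', M, fromBlocks_add, add_comm]

lemma det_fromBlocks_diagonal (a b c d : n → R) :
    (fromBlocks (diagonal a) (diagonal b) (diagonal c) (diagonal d)).det
      = ∏ i, (a i * d i - b i * c i) := by
  let e : Fin 2 × n ≃ n ⊕ n := (finTwoEquiv.prodCongr (.refl n)).trans (.boolProdEquivSum n)
  have hblock : (fromBlocks (diagonal a) (diagonal b) (diagonal c) (diagonal d)).submatrix e e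
      = blockDiagonal fun i => !![a i, b i; c i, d i] := by
    ext ⟨i, k⟩ ⟨j, l⟩
    fin_cases i <;> fin_cases j <;>
      simp [e, finTwoEquiv, Equiv.boolProdEquivSum, blockDiagonal_apply, diagonal_apply]
  rw [← det_submatrix_equiv_self e, hblock, det_blockDiagonal]
  simp only [det_fin_two_of]

end FromBlocks

theorem stmt4_general {R m₁ m₂ n : Type*} [CommRing R] [Fintype m₁] [DecidableEq m₁]
    [Fintype m₂] [DecidableEq m₂] [Fintype n] [DecidableEq n] (σe2 σf2 σh2 : R) (θ2 b : n → R)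
    {W : Matrix m₁ n R} {C : Matrix m₂ n R} (hW : Wᵀ * W = 1) (hC : Cᵀ * C = 1) :
    (fromBlocks
        (W * diagonal θ2 * Wᵀ + σe2 • (1 : Matrix m₁ m₁ R))
        (W * diagonal θ2 * diagonal b * Cᵀ)
        (C * diagonal b * diagonal θ2 * Wᵀ)
        (C * (diagonal (fun i => b i ^ 2) * diagonal θ2 + σh2 • (1 : Matrix n n R)) * Cᵀ
          + σf2 • (1 : Matrix m₂ m₂ R))).det
      = σe2 ^ (Fintype.card m₁ - Fintype.card n) * σf2 ^ (Fintype.card m₂ - Fintype.card n) *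
          ∏ i, ((σf2 + σh2) * (θ2 i + σe2) + b i ^ 2 * θ2 i * σe2) := by
  rw [Matrix.mul_assoc W _ (diagonal b), Matrix.mul_assoc C _ (diagonal θ2),
    det_fromBlocks_mul_mul_add_smul_one hW hC]
  simp only [smul_one_eq_diagonal, diagonal_mul_diagonal, diagonal_add, det_fromBlocks_diagonal]
  congr 1
  refine Finset.prod_congr rfl fun i _ => ?_
  ring

/-- determinant of the PPLS joint covariance matrix:
`det Σ = (σ_e²)^{p−r} · (σ_f²)^{q−r} · ∏ᵢ Dᵢ` with
`Dᵢ = (σ_f² + σ_h²)(θᵢ² + σ_e²) + bᵢ² θᵢ² σ_e²`. -/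
theorem stmt4 (p q r : ℕ) (hr : 1 ≤ r) (hrp : r < p) (hrq : r < q)
    (σe2 σf2 σh2 : ℝ) (hσe2 : 0 < σe2) (hσf2 : 0 < σf2) (hσh2 : 0 < σh2)
    (θ2 b : Fin r → ℝ) (hθ2 : ∀ i, 0 < θ2 i) (hb : ∀ i, 0 < b i)
    (W : Matrix (Fin p) (Fin r) ℝ) (C : Matrix (Fin q) (Fin r) ℝ)
    (hW : Wᵀ * W = 1) (hC : Cᵀ * C = 1) :
    (Matrix.fromBlocks
        (W * Matrix.diagonal θ2 * Wᵀ + σe2 • (1 : Matrix (Fin p) (Fin p) ℝ))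
        (W * Matrix.diagonal θ2 * Matrix.diagonal b * Cᵀ)
        (C * Matrix.diagonal b * Matrix.diagonal θ2 * Wᵀ)
        (C * (Matrix.diagonal (fun i => b i ^ 2) * Matrix.diagonal θ2
              + σh2 • (1 : Matrix (Fin r) (Fin r) ℝ)) * Cᵀ
          + σf2 • (1 : Matrix (Fin q) (Fin q) ℝ))).det
      = σe2 ^ (p - r) * σf2 ^ (q - r) *
          ∏ i : Fin r, ((σf2 + σh2) * (θ2 i + σe2) + b i ^ 2 * θ2 i * σe2) := by
  simpa only [Fintype.card_fin] using stmt4_general σe2 σf2 σh2 θ2 b hW hC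
end

section
/- Let Σ be the PPLS joint covariance matrix, let σ_e > 0 and σ_f > 0 denote the positive square roots of σ_e² and σ_f², and let S be any real symmetric (p+q)×(p+q) matrix with blocks S_xx ∈ ℝ^{p×p}, S_xy = S_yxᵀ ∈ ℝ^{p×q}, S_yy ∈ ℝ^{q×q}. For i = 1,…,r let w_i, c_i be the i-th columns of W, C, set D_i = (σ_f²+σ_h²)(θ_i²+σ_e²) + b_i²θ_i²σ_e², Φ_x(i) = 1 − σ_e²(σ_f²+σ_h²+b_i²θ_i²)/D_i, Φ_y(i) = 1 − σ_f²(σ_e²+θ_i²)/D_i, Φ_xy(i) = σ_e σ_f b_i θ_i² / D_i, Q_x(i) = σ_e⁻² · w_iᵀ S_xx w_i, Q_y(i) = σ_f⁻² · c_iᵀ S_yy c_i, Q_xy(i) = 2(σ_e σ_f)⁻¹ · w_iᵀ S_xy c_i. Then tr(S Σ⁻¹) = σ_e⁻²·tr(S_xx) + σ_f⁻²·tr(S_yy) − Σ_{i=1}^r ( Φ_x(i)·Q_x(i) + Φ_y(i)·Q_y(i) + Φ_xy(i)·Q_xy(i) ). -/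
open Matrix

/-!
The columns of `U = diag(W, C)` are orthonormal and span a subspace invariant under the noise
covariance `N = diag(σe² I, σf² I)`, and `Σ = U K Uᵀ + N` with `K` the joint covariance of the
latent pair.  On the range of `U` the matrix `Σ` is thus the small matrix `L = K + N'`, where
`N' = diag(σe² I_r, σf² I_r)`, and off it `Σ` is `N`, so `Σ⁻¹ = N⁻¹ - U (N'⁻¹ - L⁻¹) Uᵀ`.  Since
`L` couples only `(wᵢ, 0)` with `(0, cᵢ)`, it splits into `r` blocks of size `2 × 2` with
determinants `D i`; inverting these and taking the trace against `S` gives the scalar expansion.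
-/

section LinearAlgebra

variable {m n k l : Type*} [Fintype m]

theorem transpose_mul_mul_apply {R : Type*} [NonUnitalSemiring R] [Fintype n] (A : Matrix m k R)
    (M : Matrix m n R) (B : Matrix n l R) (i : k) (j : l) :
    (Aᵀ * M * B) i j = ∑ x, ∑ y, A x i * M x y * B y j := by
  simp only [Matrix.mul_apply, transpose_apply, Finset.sum_mul]
  exact Finset.sum_comm

theorem trace_fromBlocks_mul_fromBlocks_diagonal {R : Type*} [NonUnitalNonAssocSemiring R]
    [Fintype k] [DecidableEq k] (A B C D : Matrix k k R) (a b c d : k → R) :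
    trace (fromBlocks A B C D *
        fromBlocks (diagonal a) (diagonal b) (diagonal c) (diagonal d)) =
      ∑ i, (A i i * a i + B i i * c i + (C i i * b i + D i i * d i)) := by
  simp [fromBlocks_multiply, trace, Fintype.sum_sum_type, mul_diagonal, Finset.sum_add_distrib]

theorem fromBlocks_diagonal_mul_fromBlocks_diagonal_eq_one {F : Type*} [Field F]
    [Fintype k] [DecidableEq k] {a b c d Δ : k → F} (hΔ : ∀ i, Δ i = a i * d i - b i * c i)
    (hΔ₀ : ∀ i, Δ i ≠ 0) :
    fromBlocks (diagonal a) (diagonal b) (diagonal c) (diagonal d) *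
      fromBlocks (diagonal (d / Δ)) (diagonal (-b / Δ)) (diagonal (-c / Δ)) (diagonal (a / Δ)) =
      1 := by
  simp only [fromBlocks_multiply, diagonal_mul_diagonal, diagonal_add, Pi.div_apply, Pi.neg_apply]
  rw [← fromBlocks_one, fromBlocks_inj, ← diagonal_one, ← diagonal_zero]
  simp only [diagonal_eq_diagonal_iff]
  refine ⟨fun i => ?_, fun i => ?_, fun i => ?_, fun i => ?_⟩
  · linear_combination div_self (hΔ₀ i) - hΔ i / Δ i
  · ring
  · ring
  · linear_combination div_self (hΔ₀ i) - hΔ i / Δ i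

section Compression

variable {R : Type*} [CommRing R] [DecidableEq m] [Fintype k] [DecidableEq k]
  {U : Matrix m k R} {V : Matrix k m R} {K N' : Matrix k k R} {N : Matrix m m R}

theorem inv_mul_mul_add_eq_sub (hVU : V * U = 1) (hNU : N * U = U * N') (hVN : V * N = N' * V)
    (hN : IsUnit N) (hL : IsUnit (K + N')) :
    (U * K * V + N)⁻¹ = N⁻¹ - U * (N'⁻¹ - (K + N')⁻¹) * V := by
  rw [isUnit_iff_isUnit_det] at hN hL
  have hN' : IsUnit N'.det := by
    refine isUnit_det_of_left_inverse (B := V * N⁻¹ * U) ?_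
    rw [Matrix.mul_assoc, ← hNU, Matrix.mul_assoc, nonsing_inv_mul_cancel_left _ _ hN, hVU]
  have hVNinv : V * N⁻¹ = N'⁻¹ * V := by
    rw [← nonsing_inv_mul_cancel_left _ (V * N⁻¹) hN', ← Matrix.mul_assoc N', ← hVN,
      mul_nonsing_inv_cancel_right _ _ hN]
  have hintertwine : (U * K * V + N) * U = U * (K + N') := by
    rw [Matrix.add_mul, Matrix.mul_assoc _ V, hVU, Matrix.mul_one, hNU, Matrix.mul_add]
  have hdiff : (K + N') * (N'⁻¹ - (K + N')⁻¹) = K * N'⁻¹ := by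
    rw [Matrix.mul_sub, mul_nonsing_inv _ hL, Matrix.add_mul, mul_nonsing_inv _ hN',
      add_sub_cancel_right]
  refine inv_eq_right_inv ?_
  calc (U * K * V + N) * (N⁻¹ - U * (N'⁻¹ - (K + N')⁻¹) * V)
      = U * K * (V * N⁻¹) + N * N⁻¹ -
          (U * K * V + N) * U * (N'⁻¹ - (K + N')⁻¹) * V := by
        rw [Matrix.mul_sub, Matrix.add_mul, Matrix.mul_assoc _ V]
        simp only [Matrix.mul_assoc]
    _ = U * K * (N'⁻¹ * V) + 1 - U * ((K + N') * (N'⁻¹ - (K + N')⁻¹)) * V := by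
        rw [hVNinv, mul_nonsing_inv _ hN, hintertwine, Matrix.mul_assoc U (K + N')]
    _ = 1 := by
        rw [hdiff, ← Matrix.mul_assoc, ← Matrix.mul_assoc, add_sub_cancel_left]

theorem trace_mul_inv_mul_mul_add (S : Matrix m m R) (hVU : V * U = 1) (hNU : N * U = U * N')
    (hVN : V * N = N' * V) (hN : IsUnit N) (hL : IsUnit (K + N')) :
    trace (S * (U * K * V + N)⁻¹) =
      trace (S * N⁻¹) - trace (V * S * U * (N'⁻¹ - (K + N')⁻¹)) := by
  rw [inv_mul_mul_add_eq_sub hVU hNU hVN hN hL, Matrix.mul_sub, trace_sub,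
    ← Matrix.mul_assoc, trace_mul_comm _ V]
  simp only [Matrix.mul_assoc]

end Compression

end LinearAlgebra

section PPLS

variable {R m n k : Type*} [CommSemiring R]

/-- The joint loading matrix `diag(W, C)`, sending the latent scores of the two views to the
observed variables. -/
def pplsLoading (W : Matrix m k R) (C : Matrix n k R) : Matrix (m ⊕ n) (k ⊕ k) R :=
  fromBlocks W 0 0 C

variable (m n) in
/-- The noise covariance with variance `s = σe²` on the first view and `t = σf²` on the second.
The index types are explicit because it is used both on the observed variables and on the
scores. -/
def pplsNoiseCov [DecidableEq m] [DecidableEq n] (s t : R) : Matrix (m ⊕ n) (m ⊕ n) R :=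
  fromBlocks (s • 1) 0 0 (t • 1)

/-- The joint covariance `K` of the latent pair `(τ, B τ + η)`, where `τ` has covariance `diag(θ)`,
`B = diag(b)` and `η` has covariance `h • 1`. -/
def pplsLatentCov [DecidableEq k] (h : R) (θ b : k → R) : Matrix (k ⊕ k) (k ⊕ k) R :=
  fromBlocks (diagonal θ) (diagonal fun i => b i * θ i) (diagonal fun i => b i * θ i)
    (diagonal fun i => b i ^ 2 * θ i + h)

/-- The quantity `D i`: the determinant of the joint covariance of `wᵢᵀ x` and `cᵢᵀ y`, in the
variances `s = σe²`, `t = σf²`, `h = σh²`, `θ i = θᵢ²`. -/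
def pplsDet (s t h : R) (θ b : k → R) (i : k) : R :=
  (t + h) * (θ i + s) + b i ^ 2 * θ i * s

/-- The PPLS joint covariance `Σ`, in the variances `s = σe²`, `t = σf²`, `h = σh²`,
`θ i = θᵢ²`. -/
def pplsCov [DecidableEq m] [DecidableEq n] [Fintype k] [DecidableEq k] (s t h : R) (θ b : k → R)
    (W : Matrix m k R) (C : Matrix n k R) : Matrix (m ⊕ n) (m ⊕ n) R :=
  fromBlocks
    (W * diagonal θ * Wᵀ + s • 1)
    (W * diagonal θ * diagonal b * Cᵀ)
    (C * diagonal b * diagonal θ * Wᵀ)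
    (C * (diagonal (fun i => b i ^ 2) * diagonal θ + h • 1) * Cᵀ + t • 1)

theorem pplsCov_eq [DecidableEq m] [DecidableEq n] [Fintype k] [DecidableEq k] (s t h : R)
    (θ b : k → R) (W : Matrix m k R) (C : Matrix n k R) :
    pplsCov s t h θ b W C =
      pplsLoading W C * pplsLatentCov h θ b * (pplsLoading W C)ᵀ + pplsNoiseCov m n s t := by
  simp [pplsCov, pplsLoading, pplsLatentCov, pplsNoiseCov, fromBlocks_multiply,
    fromBlocks_transpose, fromBlocks_add, smul_one_eq_diagonal h, Matrix.mul_assoc, mul_comm]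

section Loading

variable [Fintype m] [Fintype n] {W : Matrix m k R} {C : Matrix n k R}

theorem pplsLoading_transpose_mul_mul_self (S : Matrix (m ⊕ n) (m ⊕ n) R) :
    (pplsLoading W C)ᵀ * S * pplsLoading W C =
      fromBlocks (Wᵀ * S.toBlocks₁₁ * W) (Wᵀ * S.toBlocks₁₂ * C)
        (Cᵀ * S.toBlocks₂₁ * W) (Cᵀ * S.toBlocks₂₂ * C) := by
  conv_lhs => rw [← fromBlocks_toBlocks S]
  simp [pplsLoading, fromBlocks_transpose, fromBlocks_multiply]

variable [DecidableEq k]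

theorem pplsLoading_transpose_mul_self (hW : Wᵀ * W = 1) (hC : Cᵀ * C = 1) :
    (pplsLoading W C)ᵀ * pplsLoading W C = 1 := by
  simp [pplsLoading, fromBlocks_transpose, fromBlocks_multiply, hW, hC]

variable [Fintype k] [DecidableEq m] [DecidableEq n]

theorem pplsNoiseCov_mul_pplsLoading (s t : R) :
    pplsNoiseCov m n s t * pplsLoading W C = pplsLoading W C * pplsNoiseCov k k s t := by
  simp [pplsNoiseCov, pplsLoading, fromBlocks_multiply]

theorem pplsLoading_transpose_mul_pplsNoiseCov (s t : R) :
    (pplsLoading W C)ᵀ * pplsNoiseCov m n s t =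
      pplsNoiseCov k k s t * (pplsLoading W C)ᵀ := by
  simp [pplsNoiseCov, pplsLoading, fromBlocks_transpose, fromBlocks_multiply]

end Loading

theorem pplsLatentCov_add_pplsNoiseCov [DecidableEq k] (s t h : R) (θ b : k → R) :
    pplsLatentCov h θ b + pplsNoiseCov k k s t =
      fromBlocks (diagonal fun i => θ i + s) (diagonal fun i => b i * θ i)
        (diagonal fun i => b i * θ i) (diagonal fun i => b i ^ 2 * θ i + h + t) := by
  simp [pplsLatentCov, pplsNoiseCov, fromBlocks_add, smul_one_eq_diagonal, -fromBlocks_diagonal]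

theorem trace_mul_pplsNoiseCov [Fintype m] [Fintype n] [DecidableEq m] [DecidableEq n]
    (S : Matrix (m ⊕ n) (m ⊕ n) R) (s t : R) :
    trace (S * pplsNoiseCov m n s t) = s * trace S.toBlocks₁₁ + t * trace S.toBlocks₂₂ := by
  conv_lhs => rw [← fromBlocks_toBlocks S]
  simp [pplsNoiseCov, fromBlocks_multiply, trace, Fintype.sum_sum_type, Finset.mul_sum]

section Inverse

variable {F : Type*} [Field F]

section Noise

variable [Fintype m] [Fintype n] [DecidableEq m] [DecidableEq n] {s t : F}

theorem pplsNoiseCov_mul_inv (hs : s ≠ 0) (ht : t ≠ 0) :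
    pplsNoiseCov m n s t * pplsNoiseCov m n s⁻¹ t⁻¹ = 1 := by
  simp [pplsNoiseCov, fromBlocks_multiply, smul_smul, hs, ht]

theorem isUnit_pplsNoiseCov (hs : s ≠ 0) (ht : t ≠ 0) : IsUnit (pplsNoiseCov m n s t) :=
  .of_mul_eq_one _ (pplsNoiseCov_mul_inv hs ht)

theorem inv_pplsNoiseCov (hs : s ≠ 0) (ht : t ≠ 0) :
    (pplsNoiseCov m n s t)⁻¹ = pplsNoiseCov m n s⁻¹ t⁻¹ :=
  inv_eq_right_inv (pplsNoiseCov_mul_inv hs ht)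

end Noise

section Scores

variable [DecidableEq k] {s t h : F} {θ b : k → F}

theorem pplsLatentCov_add_pplsNoiseCov_mul_eq_one [Fintype k]
    (hD : ∀ i, pplsDet s t h θ b i ≠ 0) :
    (pplsLatentCov h θ b + pplsNoiseCov k k s t) *
      fromBlocks (diagonal fun i => (b i ^ 2 * θ i + h + t) / pplsDet s t h θ b i)
        (diagonal fun i => -(b i * θ i) / pplsDet s t h θ b i)
        (diagonal fun i => -(b i * θ i) / pplsDet s t h θ b i)
        (diagonal fun i => (θ i + s) / pplsDet s t h θ b i) = 1 := by
  rw [pplsLatentCov_add_pplsNoiseCov]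
  exact fromBlocks_diagonal_mul_fromBlocks_diagonal_eq_one
    (fun i => by rw [pplsDet]; ring) hD

theorem inv_pplsNoiseCov_sub_inv [Fintype k] (hs : s ≠ 0) (ht : t ≠ 0)
    (hD : ∀ i, pplsDet s t h θ b i ≠ 0) :
    (pplsNoiseCov k k s t)⁻¹ - (pplsLatentCov h θ b + pplsNoiseCov k k s t)⁻¹ =
      fromBlocks (diagonal fun i => s⁻¹ - (b i ^ 2 * θ i + h + t) / pplsDet s t h θ b i)
        (diagonal fun i => b i * θ i / pplsDet s t h θ b i)
        (diagonal fun i => b i * θ i / pplsDet s t h θ b i)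
        (diagonal fun i => t⁻¹ - (θ i + s) / pplsDet s t h θ b i) := by
  rw [inv_pplsNoiseCov hs ht, inv_eq_right_inv (pplsLatentCov_add_pplsNoiseCov_mul_eq_one hD)]
  simp [pplsNoiseCov, sub_eq_add_neg, fromBlocks_neg, fromBlocks_add, smul_one_eq_diagonal,
    neg_div, -fromBlocks_diagonal]

end Scores

variable [Fintype m] [Fintype n] [Fintype k] [DecidableEq m] [DecidableEq n] [DecidableEq k]

theorem trace_mul_inv_pplsCov {s t h : F} {θ b : k → F}
    {W : Matrix m k F} {C : Matrix n k F} (S : Matrix (m ⊕ n) (m ⊕ n) F)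
    (hs : s ≠ 0) (ht : t ≠ 0) (hW : Wᵀ * W = 1) (hC : Cᵀ * C = 1)
    (hD : ∀ i, pplsDet s t h θ b i ≠ 0) :
    trace (S * (pplsCov s t h θ b W C)⁻¹) =
      s⁻¹ * trace S.toBlocks₁₁ + t⁻¹ * trace S.toBlocks₂₂ -
        ∑ i, ((Wᵀ * S.toBlocks₁₁ * W) i i *
              (s⁻¹ - (b i ^ 2 * θ i + h + t) / pplsDet s t h θ b i) +
            (Wᵀ * S.toBlocks₁₂ * C) i i * (b i * θ i / pplsDet s t h θ b i) +
          ((Cᵀ * S.toBlocks₂₁ * W) i i * (b i * θ i / pplsDet s t h θ b i) +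
            (Cᵀ * S.toBlocks₂₂ * C) i i * (t⁻¹ - (θ i + s) / pplsDet s t h θ b i))) := by
  rw [pplsCov_eq, trace_mul_inv_mul_mul_add S (pplsLoading_transpose_mul_self hW hC)
      (pplsNoiseCov_mul_pplsLoading s t) (pplsLoading_transpose_mul_pplsNoiseCov s t)
      (isUnit_pplsNoiseCov hs ht)
      (.of_mul_eq_one _ (pplsLatentCov_add_pplsNoiseCov_mul_eq_one hD)),
    inv_pplsNoiseCov_sub_inv hs ht hD, inv_pplsNoiseCov hs ht, trace_mul_pplsNoiseCov,
    pplsLoading_transpose_mul_mul_self, trace_fromBlocks_mul_fromBlocks_diagonal]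

theorem stmt5_general {σe σf σh2 : F} (hσe : σe ≠ 0) (hσf : σf ≠ 0)
    {θ2 b : k → F} {W : Matrix m k F} {C : Matrix n k F} (hW : Wᵀ * W = 1) (hC : Cᵀ * C = 1)
    {S : Matrix (m ⊕ n) (m ⊕ n) F} (hS : S.IsSymm) {D Φx Φy Φxy Qx Qy Qxy : k → F}
    (hD : ∀ i, D i = (σf ^ 2 + σh2) * (θ2 i + σe ^ 2) + b i ^ 2 * θ2 i * σe ^ 2)
    (hD₀ : ∀ i, D i ≠ 0)
    (hΦx : ∀ i, Φx i = 1 - σe ^ 2 * (σf ^ 2 + σh2 + b i ^ 2 * θ2 i) / D i)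
    (hΦy : ∀ i, Φy i = 1 - σf ^ 2 * (σe ^ 2 + θ2 i) / D i)
    (hΦxy : ∀ i, Φxy i = σe * σf * b i * θ2 i / D i)
    (hQx : ∀ i, Qx i = (σe ^ 2)⁻¹ * ∑ j, ∑ j', W j i * S.toBlocks₁₁ j j' * W j' i)
    (hQy : ∀ i, Qy i = (σf ^ 2)⁻¹ * ∑ l, ∑ l', C l i * S.toBlocks₂₂ l l' * C l' i)
    (hQxy : ∀ i, Qxy i = 2 * (σe * σf)⁻¹ * ∑ j, ∑ l, W j i * S.toBlocks₁₂ j l * C l i) :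
    trace (S * (pplsCov (σe ^ 2) (σf ^ 2) σh2 θ2 b W C)⁻¹) =
      (σe ^ 2)⁻¹ * trace S.toBlocks₁₁ + (σf ^ 2)⁻¹ * trace S.toBlocks₂₂ -
        ∑ i, (Φx i * Qx i + Φy i * Qy i + Φxy i * Qxy i) := by
  obtain rfl : D = pplsDet (σe ^ 2) (σf ^ 2) σh2 θ2 b := funext hD
  have hcross (i : k) : (Cᵀ * S.toBlocks₂₁ * W) i i = (Wᵀ * S.toBlocks₁₂ * C) i i := by
    have hS₂₁ : S.toBlocks₂₁ = S.toBlocks₁₂ᵀ := Matrix.ext fun l j => hS.apply _ _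
    rw [← transpose_apply (Cᵀ * _ * W), hS₂₁]
    simp only [transpose_mul, transpose_transpose, Matrix.mul_assoc]
  rw [trace_mul_inv_pplsCov S (pow_ne_zero 2 hσe) (pow_ne_zero 2 hσf) hW hC hD₀]
  congr 1
  refine Finset.sum_congr rfl fun i _ => ?_
  rw [hcross, hΦx, hΦy, hΦxy, hQx, hQy, hQxy]
  simp only [← transpose_mul_mul_apply]
  have := hD₀ i
  field_simp
  ring

end Inverse

end PPLS

/-- scalar expansion of `tr(S Σ⁻¹)` for the PPLS joint
covariance `Σ` and an arbitrary symmetric matrix `S`.  Here `σe, σf > 0`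
are the positive square roots of the noise variances. -/
theorem stmt5 (p q r : ℕ) (hr : 1 ≤ r) (hrp : r < p) (hrq : r < q)
    (σe σf : ℝ) (hσe : 0 < σe) (hσf : 0 < σf)
    (σh2 : ℝ) (hσh2 : 0 < σh2)
    (θ2 b : Fin r → ℝ) (hθ2 : ∀ i, 0 < θ2 i) (hb : ∀ i, 0 < b i)
    (W : Matrix (Fin p) (Fin r) ℝ) (C : Matrix (Fin q) (Fin r) ℝ)
    (hW : Wᵀ * W = 1) (hC : Cᵀ * C = 1)
    (Sig : Matrix (Fin p ⊕ Fin q) (Fin p ⊕ Fin q) ℝ)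
    (hSig : Sig = Matrix.fromBlocks
        (W * Matrix.diagonal θ2 * Wᵀ + σe ^ 2 • (1 : Matrix (Fin p) (Fin p) ℝ))
        (W * Matrix.diagonal θ2 * Matrix.diagonal b * Cᵀ)
        (C * Matrix.diagonal b * Matrix.diagonal θ2 * Wᵀ)
        (C * (Matrix.diagonal (fun i => b i ^ 2) * Matrix.diagonal θ2
              + σh2 • (1 : Matrix (Fin r) (Fin r) ℝ)) * Cᵀ
          + σf ^ 2 • (1 : Matrix (Fin q) (Fin q) ℝ)))
    (S : Matrix (Fin p ⊕ Fin q) (Fin p ⊕ Fin q) ℝ) (hS : S.IsSymm)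
    (D Φx Φy Φxy Qx Qy Qxy : Fin r → ℝ)
    (hD : ∀ i, D i = (σf ^ 2 + σh2) * (θ2 i + σe ^ 2) + b i ^ 2 * θ2 i * σe ^ 2)
    (hΦx : ∀ i, Φx i = 1 - σe ^ 2 * (σf ^ 2 + σh2 + b i ^ 2 * θ2 i) / D i)
    (hΦy : ∀ i, Φy i = 1 - σf ^ 2 * (σe ^ 2 + θ2 i) / D i)
    (hΦxy : ∀ i, Φxy i = σe * σf * b i * θ2 i / D i)
    (hQx : ∀ i, Qx i
      = (σe ^ 2)⁻¹ * ∑ j : Fin p, ∑ j' : Fin p, W j i * S.toBlocks₁₁ j j' * W j' i)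
    (hQy : ∀ i, Qy i
      = (σf ^ 2)⁻¹ * ∑ l : Fin q, ∑ l' : Fin q, C l i * S.toBlocks₂₂ l l' * C l' i)
    (hQxy : ∀ i, Qxy i
      = 2 * (σe * σf)⁻¹ * ∑ j : Fin p, ∑ l : Fin q, W j i * S.toBlocks₁₂ j l * C l i) :
    Matrix.trace (S * Sig⁻¹)
      = (σe ^ 2)⁻¹ * Matrix.trace S.toBlocks₁₁ + (σf ^ 2)⁻¹ * Matrix.trace S.toBlocks₂₂
        - ∑ i : Fin r, (Φx i * Qx i + Φy i * Qy i + Φxy i * Qxy i) := by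
  rw [hSig]
  exact stmt5_general hσe.ne' hσf.ne' hW hC hS hD
    (fun i => by have := hθ2 i; rw [hD]; positivity) hΦx hΦy hΦxy hQx hQy hQxy
end

section
/- Fix reals σ_e² > 0, σ_f² > 0, σ_h² > 0, b > 0, and Q_x, Q_y, Q_xy ∈ ℝ. Define D(s) = (σ_f²+σ_h²)(s+σ_e²) + b² s σ_e², N(s) = (σ_f²+σ_h²) s Q_x + σ_h²(s+σ_e²) Q_y + b² s σ_e² Q_y + b s Q_xy, and ℓ(s) = log D(s) − N(s)/D(s) on the set {s ∈ ℝ : D(s) > 0}. Set d = (σ_f²+σ_h²) + b²σ_e², n = (σ_f²+σ_h²)Q_x + (σ_h²+b²σ_e²)Q_y + b Q_xy, and s* = σ_e² · ( (n−d)(σ_f²+σ_h²) − d σ_h² Q_y ) / d². Then ℓ is differentiable at every s with D(s) > 0, and for such s the derivative ℓ'(s) equals 0 if and only if s = s*. -/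
/-- `D(s) = (σ_f²+σ_h²)(s+σ_e²) + b² s σ_e²`. -/
noncomputable def Dfun (σe2 σf2 σh2 b : ℝ) (s : ℝ) : ℝ :=
  (σf2 + σh2) * (s + σe2) + b ^ 2 * s * σe2

/-- `N(s) = (σ_f²+σ_h²) s Q_x + σ_h²(s+σ_e²) Q_y + b² s σ_e² Q_y + b s Q_xy`. -/
noncomputable def Nfun (σe2 σf2 σh2 b Qx Qy Qxy : ℝ) (s : ℝ) : ℝ :=
  (σf2 + σh2) * s * Qx + σh2 * (s + σe2) * Qy + b ^ 2 * s * σe2 * Qy + b * s * Qxy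

/-- `ℓ(s) = log D(s) − N(s)/D(s)`. -/
noncomputable def ellfun (σe2 σf2 σh2 b Qx Qy Qxy : ℝ) (s : ℝ) : ℝ :=
  Real.log (Dfun σe2 σf2 σh2 b s) - Nfun σe2 σf2 σh2 b Qx Qy Qxy s / Dfun σe2 σf2 σh2 b s

/-!
The derivative of `log D - N / D` is `(D' D - (N' D - N D')) / D ^ 2`. When `D` and `N` are affine,
the Wronskian `N' D - N D'` is constant, so the numerator is affine in `s` with leading coefficient
`D' ^ 2`, and hence has exactly one zero as soon as `D' ≠ 0`.
-/

theorem hasDerivAt_log_sub_div {D N : ℝ → ℝ} {D' N' s : ℝ}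
    (hD : HasDerivAt D D' s) (hN : HasDerivAt N N' s) (hs : D s ≠ 0) :
    HasDerivAt (fun t => Real.log (D t) - N t / D t)
      ((D' * D s - (N' * D s - N s * D')) / D s ^ 2) s := by
  refine ((hD.log hs).sub (hN.div hD hs)).congr_deriv ?_
  field_simp

theorem hasDerivAt_log_sub_div_affine (d d₀ n n₀ : ℝ) {s : ℝ} (hs : d * s + d₀ ≠ 0) :
    HasDerivAt (fun t => Real.log (d * t + d₀) - (n * t + n₀) / (d * t + d₀))
      ((s * d ^ 2 - ((n - d) * d₀ - d * n₀)) / (d * s + d₀) ^ 2) s := by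
  have hasDerivAt_affine (a c : ℝ) : HasDerivAt (fun t => a * t + c) a s :=
    (hasDerivAt_const_mul a).add_const c
  convert hasDerivAt_log_sub_div (hasDerivAt_affine d d₀) (hasDerivAt_affine n n₀) hs using 2
  ring

theorem stmt11_general {d d₀ n n₀ s : ℝ} (hd : d ≠ 0) (hs : 0 < d * s + d₀) :
    DifferentiableAt ℝ (fun t => Real.log (d * t + d₀) - (n * t + n₀) / (d * t + d₀)) s ∧
      (deriv (fun t => Real.log (d * t + d₀) - (n * t + n₀) / (d * t + d₀)) s = 0 ↔
        s = ((n - d) * d₀ - d * n₀) / d ^ 2) := by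
  have h := hasDerivAt_log_sub_div_affine d d₀ n n₀ hs.ne'
  refine ⟨h.differentiableAt, ?_⟩
  rw [h.deriv, div_eq_zero_iff, or_iff_left (pow_ne_zero 2 hs.ne'), sub_eq_zero,
    eq_div_iff (pow_ne_zero 2 hd)]

theorem Dfun_eq_affine (σe2 σf2 σh2 b : ℝ) :
    Dfun σe2 σf2 σh2 b =
      fun s => ((σf2 + σh2) + b ^ 2 * σe2) * s + σe2 * (σf2 + σh2) := by
  ext s
  rw [Dfun]
  ring

theorem Nfun_eq_affine (σe2 σf2 σh2 b Qx Qy Qxy : ℝ) :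
    Nfun σe2 σf2 σh2 b Qx Qy Qxy =
      fun s => ((σf2 + σh2) * Qx + (σh2 + b ^ 2 * σe2) * Qy + b * Qxy) * s + σe2 * (σh2 * Qy) := by
  ext s
  rw [Nfun]
  ring

theorem ellfun_eq_affine (σe2 σf2 σh2 b Qx Qy Qxy : ℝ) :
    ellfun σe2 σf2 σh2 b Qx Qy Qxy = fun s =>
      Real.log (((σf2 + σh2) + b ^ 2 * σe2) * s + σe2 * (σf2 + σh2)) -
        (((σf2 + σh2) * Qx + (σh2 + b ^ 2 * σe2) * Qy + b * Qxy) * s + σe2 * (σh2 * Qy)) /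
          (((σf2 + σh2) + b ^ 2 * σe2) * s + σe2 * (σf2 + σh2)) := by
  ext s
  rw [ellfun, Dfun_eq_affine, Nfun_eq_affine]

/-- on `{s : D(s) > 0}`, `ℓ` is differentiable, and its
derivative vanishes exactly at the closed-form stationary point
`s* = σ_e²·((n−d)(σ_f²+σ_h²) − d σ_h² Q_y)/d²`. -/
theorem stmt11 (σe2 σf2 σh2 b Qx Qy Qxy : ℝ)
    (hσe2 : 0 < σe2) (hσf2 : 0 < σf2) (hσh2 : 0 < σh2) (hb : 0 < b) :
    ∀ s : ℝ, 0 < Dfun σe2 σf2 σh2 b s →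
      DifferentiableAt ℝ (ellfun σe2 σf2 σh2 b Qx Qy Qxy) s ∧
      (deriv (ellfun σe2 σf2 σh2 b Qx Qy Qxy) s = 0 ↔
        s = σe2 * ((((σf2 + σh2) * Qx + (σh2 + b ^ 2 * σe2) * Qy + b * Qxy)
                - ((σf2 + σh2) + b ^ 2 * σe2)) * (σf2 + σh2)
              - ((σf2 + σh2) + b ^ 2 * σe2) * σh2 * Qy)
            / ((σf2 + σh2) + b ^ 2 * σe2) ^ 2) := by
  intro s hs
  rw [Dfun_eq_affine] at hs
  rw [ellfun_eq_affine]
  convert stmt11_general (by positivity) hs using 4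
  ring
end
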